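/- For every integer k ≥ 1 and every real number x with x² ≠ 1: Σ_{i=1}^{k} U_{i-1}(x)·U_{i+1}(x) = (U_2(x)·U_{2k}(x) - 2x·U_{2k-1}(x) - 2(k+1)·T_2(x) - 1)/(4(x² - 1)). -/

import Mathlib

/-- Evaluation of the Chebyshev polynomial of the first kind `T_n` at a real `x`
(indices extended to all integers via the Chebyshev recurrence). -/
noncomputable def chebT (n : ℤ) (x : ℝ) : ℝ := (Polynomial.Chebyshev.T ℝ n).eval x

/-- Evaluation of the Chebyshev polynomial of the second kind `U_n` at a real `x`
(indices extended to all integers via the Chebyshev recurrence). -/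
noncomputable def chebU (n : ℤ) (x : ℝ) : ℝ := (Polynomial.Chebyshev.U ℝ n).eval x

/-- `Z_n(x) = (U_n(x) - U_{n-1}(x) - 1)/(2(x - 1))`. -/
noncomputable def Zc (n : ℤ) (x : ℝ) : ℝ := (chebU n x - chebU (n - 1) x - 1) / (2 * (x - 1))

theorem chebU_rec (n : ℤ) (x : ℝ) : chebU (n + 2) x = 2 * x * chebU (n + 1) x - chebU n x := by
  simp [chebU, Polynomial.Chebyshev.U_add_two]

theorem chebU_double (k : ℕ) (x : ℝ) :
    chebU (2 * (k : ℤ)) x = chebU k x ^ 2 - chebU ((k : ℤ) - 1) x ^ 2 ∧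
    chebU (2 * (k : ℤ) - 1) x =
      2 * chebU ((k : ℤ) - 1) x * chebU k x - 2 * x * chebU ((k : ℤ) - 1) x ^ 2 ∧
    chebU ((k : ℤ) - 1) x ^ 2 + chebU k x ^ 2
      - 2 * x * chebU ((k : ℤ) - 1) x * chebU k x = 1 := by
  induction k with
  | zero => simp [chebU]
  | succ k ih =>
    obtain ⟨h1, h2, h3⟩ := ih
    have e1 := chebU_rec ((k : ℤ) - 1) x
    have e2 := chebU_rec (2 * (k : ℤ) - 1) x
    have e3 := chebU_rec (2 * (k : ℤ)) x
    rw [show (k : ℤ) - 1 + 2 = k + 1 by ring, show (k : ℤ) - 1 + 1 = k by ring] at e1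
    rw [show 2 * (k : ℤ) - 1 + 2 = 2 * k + 1 by ring,
      show 2 * (k : ℤ) - 1 + 1 = 2 * k by ring] at e2
    push_cast
    rw [show 2 * ((k : ℤ) + 1) - 1 = 2 * k + 1 by ring,
      show 2 * ((k : ℤ) + 1) = 2 * k + 2 by ring, show (k : ℤ) + 1 - 1 = k by ring,
      e3, e2, e1, h1, h2]
    refine ⟨by ring, by ring, ?_⟩
    linear_combination h3

theorem sum_aux (k : ℕ) (x : ℝ) :
    4 * (x ^ 2 - 1) * ∑ i ∈ Finset.Icc (1 : ℤ) (k : ℤ), chebU (i - 1) x * chebU (i + 1) x =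
      chebU 2 x * chebU (2 * (k : ℤ)) x - 2 * x * chebU (2 * (k : ℤ) - 1) x -
          2 * (k + 1) * chebT 2 x - 1 := by
  have u2 : chebU 2 x = 4 * x ^ 2 - 1 := by simp [chebU, Polynomial.Chebyshev.U_two]
  have t2 : chebT 2 x = 2 * x ^ 2 - 1 := by simp [chebT, Polynomial.Chebyshev.T_two]
  induction k with
  | zero =>
    rw [u2, t2]
    simp [chebU]
    ring
  | succ k ih =>
    have hs : Finset.Icc (1 : ℤ) ((k + 1 : ℕ) : ℤ)
        = insert ((k : ℤ) + 1) (Finset.Icc (1 : ℤ) (k : ℤ)) := by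
      ext i
      simp only [Finset.mem_Icc, Finset.mem_insert]
      omega
    rw [hs, Finset.sum_insert (by simp), mul_add, ih, u2, t2]
    obtain ⟨h1, h2, h3⟩ := chebU_double k x
    obtain ⟨g1, g2, g3⟩ := chebU_double (k + 1) x
    have e1 := chebU_rec ((k : ℤ) - 1) x
    have e2 := chebU_rec (k : ℤ) x
    rw [show (k : ℤ) - 1 + 2 = k + 1 by ring, show (k : ℤ) - 1 + 1 = k by ring] at e1
    rw [g1, g2, h1, h2]
    push_cast
    rw [show (k : ℤ) + 1 - 1 = k by ring, show (k : ℤ) + 1 + 1 = k + 2 by ring, e2, e1]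
    linear_combination (-2 * (2 * x ^ 2 - 1)) * h3

/-- `Σ_{i=1}^{k} U_{i-1}(x)·U_{i+1}(x) = (U_2(x)·U_{2k}(x) - 2x·U_{2k-1}(x) - 2(k+1)·T_2(x) - 1)/(4(x² - 1))`. -/
theorem sum_q34 (k : ℕ) (hk : 1 ≤ k) (x : ℝ) (hx : x ^ 2 ≠ 1) :
    ∑ i ∈ Finset.Icc (1 : ℤ) (k : ℤ), chebU (i - 1) x * chebU (i + 1) x =
      (chebU 2 x * chebU (2 * (k : ℤ)) x - 2 * x * chebU (2 * (k : ℤ) - 1) x -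
          2 * (k + 1) * chebT 2 x - 1) / (4 * (x ^ 2 - 1)) := by
  have h : 4 * (x ^ 2 - 1) ≠ 0 := mul_ne_zero (by norm_num) (sub_ne_zero.mpr hx)
  rw [eq_div_iff h, mul_comm]
  exact sum_aux k x
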